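/- (Surjectivity onto germs vanishing at infinity: the H¹-surjectivity part of Theorem 2.5 in concrete form.) Let W ⊆ ℂ be a bounded open set, K ⊆ W a compact set, and f : ℂ → ℂ a function holomorphic on ℂ \ K with f(λ) → 0 as |λ| → ∞. Then there exist a smooth g : ℂ → ℂ with tsupport g compact and contained in W and a compact set K′ ⊆ W such that (Tg)(λ) = f(λ) for all λ ∈ ℂ \ K′. -/

import Mathlib

open MeasureTheory

/-- The Cauchy transform `(Tg)(z) = (1/π) ∫_ℂ g(μ)/(z - μ) dA(μ)` (the integrand is `0`
at `μ = z` by the division-by-zero convention). -/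
noncomputable def cauchyT (g : ℂ → ℂ) (z : ℂ) : ℂ :=
  (1 / (Real.pi : ℂ)) * ∫ μ : ℂ, g μ / (z - μ)

/-!
Cut `f` off near `K` to obtain a smooth `F` on `ℂ` that equals `f` outside a compact `M ⊆ W`.
Then `g = ∂̄F` is supported in `M`, because `F` is holomorphic off `M`, and `Tg = F` by the
Cauchy–Pompeiu formula, whose boundary term is the average of `F` over a large circle and
disappears in the limit because `F` vanishes at infinity.
-/

open Bornology Complex ComplexConjugate Filter Metric Real Set Topology

section Polar

variable {E : Type*} [NormedAddCommGroup E] [NormedSpace ℝ E] {f : ℂ → E} {c : ℂ} {R : ℝ}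

theorem add_polarCoord_symm_eq_circleMap (c : ℂ) (p : ℝ × ℝ) :
    c + Complex.polarCoord.symm p = circleMap c p.1 p.2 := by
  simp [circleMap, Complex.exp_mul_I]

theorem two_pi_smul_circleAverage_eq_integral_neg_pi_pi (f : ℂ → E) (c : ℂ) (R : ℝ) :
    (2 * π) • circleAverage f c R = ∫ θ in -π..π, f (circleMap c R θ) := by
  have periodic : (fun θ ↦ f (circleMap c R θ)).Periodic (2 * π) :=
    fun θ ↦ congrArg f (periodic_circleMap c R θ)
  have shift := periodic.intervalIntegral_add_eq (-π) 0
  rw [show -π + 2 * π = π by ring, zero_add] at shift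
  rw [circleAverage_def, smul_inv_smul₀ two_pi_pos.ne', shift]

theorem setIntegral_ball_eq_setIntegral_circleMap (f : ℂ → E) (c : ℂ) (R : ℝ) :
    ∫ z in ball c R, f z =
      ∫ p in Ioo 0 R ×ˢ Ioo (-π) π, p.1 • f (circleMap c p.1 p.2) := by
  have mem_ball_iff {p : ℝ × ℝ} (hp : 0 < p.1) : circleMap c p.1 p.2 ∈ ball c R ↔ p.1 < R := by
    rw [mem_ball, dist_eq_norm, circleMap_sub_center, norm_circleMap_zero, abs_of_pos hp]
  calc
    ∫ z in ball c R, f z = ∫ w, (ball c R).indicator f (c + w) := by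
      rw [integral_add_left_eq_self ((ball c R).indicator f), integral_indicator measurableSet_ball]
    _ = ∫ p in Ioi 0 ×ˢ Ioo (-π) π, p.1 • (ball c R).indicator f (circleMap c p.1 p.2) := by
      simp_rw [← Complex.integral_comp_polarCoord_symm, add_polarCoord_symm_eq_circleMap,
        polarCoord_target]
    _ = ∫ p in Ioo 0 R ×ˢ Ioo (-π) π, p.1 • (ball c R).indicator f (circleMap c p.1 p.2) := by
      refine setIntegral_eq_of_subset_of_forall_sdiff_eq_zero
        (measurableSet_Ioi.prod measurableSet_Ioo) (prod_mono Ioo_subset_Ioi_self subset_rfl) ?_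
      rintro p ⟨⟨hp, hθ⟩, hpR⟩
      rw [indicator_of_notMem, smul_zero]
      exact fun h ↦ hpR ⟨⟨hp, (mem_ball_iff hp).1 h⟩, hθ⟩
    _ = _ := by
      refine setIntegral_congr_fun (measurableSet_Ioo.prod measurableSet_Ioo) fun p hp ↦ ?_
      simp only [indicator_of_mem ((mem_ball_iff hp.1.1).2 hp.1.2)]

theorem setIntegral_ball_eq_integral_circleAverage (hR : 0 ≤ R)
    (hf : IntegrableOn (fun p : ℝ × ℝ ↦ p.1 • f (circleMap c p.1 p.2))
      (Ioo 0 R ×ˢ Ioo (-π) π)) :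
    ∫ z in ball c R, f z = ∫ r in 0..R, (2 * π * r) • circleAverage f c r := by
  have inner (r : ℝ) : ∫ θ in Ioo (-π) π, r • f (circleMap c r θ) =
      (2 * π * r) • circleAverage f c r := by
    rw [integral_smul, mul_comm, mul_smul, two_pi_smul_circleAverage_eq_integral_neg_pi_pi,
      intervalIntegral.integral_of_le (neg_le_self pi_nonneg), integral_Ioc_eq_integral_Ioo]
  rw [setIntegral_ball_eq_setIntegral_circleMap, Measure.volume_eq_prod, setIntegral_prod _ hf,
    intervalIntegral.integral_of_le hR, integral_Ioc_eq_integral_Ioo]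
  simp only [inner]

theorem norm_circleAverage_le_of_forall_mem_sphere {C : ℝ}
    (hf : ∀ z ∈ sphere c |R|, ‖f z‖ ≤ C) : ‖circleAverage f c R‖ ≤ C := by
  have bound : ‖∫ θ in 0..2 * π, f (circleMap c R θ)‖ ≤ C * |2 * π - 0| :=
    intervalIntegral.norm_integral_le_of_norm_le_const fun θ _ ↦ hf _ (circleMap_mem_sphere' c R θ)
  rw [sub_zero, abs_of_pos two_pi_pos, mul_comm C] at bound
  rwa [circleAverage_def, norm_smul, norm_inv, Real.norm_of_nonneg two_pi_pos.le,
    inv_mul_le_iff₀ two_pi_pos]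

theorem tendsto_circleAverage_atTop_zero (hf : Tendsto f (cobounded ℂ) (𝓝 0)) (c : ℂ) :
    Tendsto (circleAverage f c) atTop (𝓝 0) := by
  refine Metric.nhds_basis_closedBall.tendsto_right_iff.2 fun ε hε ↦ ?_
  have small : ∀ᶠ z in cobounded ℂ, ‖f z‖ ≤ ε := by
    simpa using hf.eventually (closedBall_mem_nhds 0 hε)
  obtain ⟨R₀, hR₀⟩ := (hasBasis_cobounded_compl_ball c).eventually_iff.1 small |>.imp fun _ h ↦ h.2
  filter_upwards [eventually_ge_atTop R₀] with R hR
  rw [mem_closedBall_zero_iff]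
  refine norm_circleAverage_le_of_forall_mem_sphere fun z hz ↦ hR₀ ?_
  rw [mem_compl_iff, mem_ball, mem_sphere.1 hz, not_lt]
  exact hR.trans (le_abs_self R)

end Polar

section FDerivCircle

variable {E : Type*} [NormedAddCommGroup E] [NormedSpace ℝ E] [CompleteSpace E] {F : ℂ → E}

theorem integral_fderiv_I_mul_circleMap_eq_zero (hF : ContDiff ℝ 1 F) (c : ℂ) (r : ℝ) :
    ∫ θ in 0..2 * π, fderiv ℝ F (circleMap c r θ) (I * circleMap 0 r θ) = 0 := by
  have : Continuous (fderiv ℝ F) := hF.continuous_fderiv one_ne_zero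
  have deriv_angular (θ : ℝ) : HasDerivAt (fun θ ↦ F (circleMap c r θ))
      (fderiv ℝ F (circleMap c r θ) (I * circleMap 0 r θ)) θ := by
    rw [mul_comm I]
    exact (hF.differentiable one_ne_zero _).hasFDerivAt.comp_hasDerivAt θ
      (hasDerivAt_circleMap c r θ)
  rw [intervalIntegral.integral_eq_sub_of_hasDerivAt (fun θ _ ↦ deriv_angular θ)
    (Continuous.intervalIntegrable (by fun_prop) _ _), sub_eq_zero]
  simpa using congrArg F (periodic_circleMap c r 0)

theorem integral_fderiv_circleMap_radial (hF : ContDiff ℝ 1 F) (c : ℂ) (R θ : ℝ) :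
    ∫ r in 0..R, fderiv ℝ F (circleMap c r θ) (circleMap 0 1 θ) =
      F (circleMap c R θ) - F c := by
  have : Continuous (fderiv ℝ F) := hF.continuous_fderiv one_ne_zero
  have deriv_radial (r : ℝ) : HasDerivAt (fun r ↦ F (circleMap c r θ))
      (fderiv ℝ F (circleMap c r θ) (circleMap 0 1 θ)) r := by
    have deriv_circleMap_radius : HasDerivAt (fun r ↦ circleMap c r θ) (circleMap 0 1 θ) r := by
      simpa [circleMap] using ((hasDerivAt_id r).ofReal_comp.mul_const (exp (θ * I))).const_add c
    exact (hF.differentiable one_ne_zero _).hasFDerivAt.comp_hasDerivAt r deriv_circleMap_radius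
  rw [intervalIntegral.integral_eq_sub_of_hasDerivAt (fun r _ ↦ deriv_radial r)
    (Continuous.intervalIntegrable (by fun_prop) _ _), circleMap_zero_radius, Function.const_apply]

theorem integral_integral_fderiv_circleMap_radial (hF : ContDiff ℝ 1 F) (c : ℂ) (R : ℝ) :
    ∫ r in 0..R, ∫ θ in 0..2 * π, fderiv ℝ F (circleMap c r θ) (circleMap 0 1 θ) =
      (2 * π) • (circleAverage F c R - F c) := by
  have : Continuous (fderiv ℝ F) := hF.continuous_fderiv one_ne_zero
  have hFc : Continuous F := hF.continuous
  have integrable : IntegrableOn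
      (Function.uncurry fun r θ : ℝ ↦ fderiv ℝ F (circleMap c r θ) (circleMap 0 1 θ))
      (uIoc 0 R ×ˢ uIoc 0 (2 * π)) :=
    (Continuous.continuousOn (by simp only [Function.uncurry_def]; fun_prop)).integrableOn_compact
      (isCompact_uIcc.prod isCompact_uIcc) |>.mono_set
      (prod_mono uIoc_subset_uIcc uIoc_subset_uIcc)
  rw [intervalIntegral_intervalIntegral_swap integrable]
  simp_rw [integral_fderiv_circleMap_radial hF]
  rw [intervalIntegral.integral_sub (Continuous.intervalIntegrable (by fun_prop) _ _)
    intervalIntegrable_const, intervalIntegral.integral_const, sub_zero, smul_sub,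
    circleAverage_def, smul_inv_smul₀ two_pi_pos.ne']

end FDerivCircle

section Dbar

variable {E : Type*} [NormedAddCommGroup E] [NormedSpace ℂ E] {F : ℂ → E} {z : ℂ} {M : Set ℂ}

/-- The Wirtinger derivative `∂̄F = (∂ₓF + i ∂_yF) / 2` of a function of one complex variable with
values in a complex normed space. Like `fderiv`, it is `0` where `F` is not real-differentiable. -/
noncomputable def dbar (F : ℂ → E) (z : ℂ) : E :=
  (1 / 2 : ℂ) • (fderiv ℝ F z 1 + I • fderiv ℝ F z I)

theorem map_add_I_smul_map_I_mul (L : ℂ →L[ℝ] E) (w : ℂ) :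
    L w + I • L (I * w) = conj w • (L 1 + I • L I) := by
  have map_eq (u : ℂ) : L u = (u.re : ℂ) • L 1 + (u.im : ℂ) • L I := by
    conv_lhs => rw [← re_add_im u, ← mul_one (u.re : ℂ), ← real_smul, ← real_smul]
    simp only [map_add, map_smul, Complex.coe_smul]
  have conj_eq : conj w = w.re - w.im * I := by apply Complex.ext <;> simp
  rw [map_eq w, map_eq (I * w), conj_eq, I_mul_re, I_mul_im, ofReal_neg]
  match_scalars
  · ring
  · linear_combination (w.im : ℂ) * I_sq

theorem two_smul_conj_smul_dbar (F : ℂ → E) (z w : ℂ) :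
    (2 : ℂ) • conj w • dbar F z = fderiv ℝ F z w + I • fderiv ℝ F z (I * w) := by
  rw [map_add_I_smul_map_I_mul, dbar]
  module

theorem dbar_eq_zero_of_differentiableAt (hF : DifferentiableAt ℂ F z) : dbar F z = 0 := by
  have map_I : fderiv ℂ F z I = I • fderiv ℂ F z 1 := by rw [← map_smul, smul_eq_mul, mul_one]
  simp only [dbar, hF.fderiv_restrictScalars ℝ, ContinuousLinearMap.coe_restrictScalars', map_I,
    smul_smul, I_mul_I, neg_one_smul, add_neg_cancel, smul_zero]

theorem tsupport_dbar_subset (hM : IsClosed M) (hF : DifferentiableOn ℂ F Mᶜ) :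
    tsupport (dbar F) ⊆ M :=
  closure_minimal (fun _ hz ↦ by_contra fun hzM ↦
    hz (dbar_eq_zero_of_differentiableAt (hF.differentiableAt (hM.isOpen_compl.mem_nhds hzM)))) hM

theorem contDiff_dbar {m n : WithTop ℕ∞} (hF : ContDiff ℝ n F) (hmn : m + 1 ≤ n) :
    ContDiff ℝ m (dbar F) := by
  have := hF.fderiv_right hmn
  unfold dbar
  fun_prop

end Dbar

section CauchyPompeiu

variable {E : Type*} [NormedAddCommGroup E] [NormedSpace ℂ E] {F : ℂ → E}

theorem smul_inv_circleMap_smul {r : ℝ} (hr : r ≠ 0) (θ : ℝ) (v : E) :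
    r • (circleMap 0 r θ)⁻¹ • v = conj (circleMap 0 1 θ) • v := by
  have norm_eq_one : ‖circleMap 0 1 θ‖ = 1 := by rw [norm_circleMap_zero, abs_one]
  have scale : circleMap 0 r θ = r * circleMap 0 1 θ := by simp [circleMap]
  rw [← inv_eq_conj norm_eq_one, scale, mul_inv, mul_smul, ← Complex.coe_smul,
    smul_inv_smul₀ (ofReal_ne_zero.2 hr)]

variable [CompleteSpace E]

theorem integral_conj_circleMap_smul_dbar (hF : ContDiff ℝ 1 F) (c : ℂ) {r : ℝ} (hr : r ≠ 0) :
    ∫ θ in 0..2 * π, conj (circleMap 0 1 θ) • dbar F (circleMap c r θ) =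
      (1 / 2 : ℂ) • ∫ θ in 0..2 * π, fderiv ℝ F (circleMap c r θ) (circleMap 0 1 θ) := by
  have : Continuous (fderiv ℝ F) := hF.continuous_fderiv one_ne_zero
  have angular_eq_zero :
      ∫ θ in 0..2 * π, fderiv ℝ F (circleMap c r θ) (I * circleMap 0 1 θ) = 0 := by
    have scale (θ : ℝ) : I * circleMap 0 r θ = r • (I * circleMap 0 1 θ) := by
      simp [circleMap, mul_left_comm]
    have := integral_fderiv_I_mul_circleMap_eq_zero hF c r
    simp_rw [scale, map_smul, intervalIntegral.integral_smul] at this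
    exact (smul_eq_zero.1 this).resolve_left hr
  have split (θ : ℝ) : conj (circleMap 0 1 θ) • dbar F (circleMap c r θ) =
      (1 / 2 : ℂ) • (fderiv ℝ F (circleMap c r θ) (circleMap 0 1 θ) +
        I • fderiv ℝ F (circleMap c r θ) (I * circleMap 0 1 θ)) := by
    rw [← two_smul_conj_smul_dbar, smul_smul, one_div_mul_cancel two_ne_zero, one_smul]
  simp_rw [split]
  rw [intervalIntegral.integral_smul, intervalIntegral.integral_add
    (Continuous.intervalIntegrable (by fun_prop) _ _)
    (Continuous.intervalIntegrable (by fun_prop) _ _), intervalIntegral.integral_smul,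
    angular_eq_zero, smul_zero, add_zero]

theorem smul_circleAverage_inv_sub_smul_dbar (hF : ContDiff ℝ 1 F) (c : ℂ) {r : ℝ} (hr : r ≠ 0) :
    (2 * π * r) • circleAverage (fun z ↦ (z - c)⁻¹ • dbar F z) c r =
      (1 / 2 : ℂ) • ∫ θ in 0..2 * π, fderiv ℝ F (circleMap c r θ) (circleMap 0 1 θ) := by
  rw [← integral_conj_circleMap_smul_dbar hF c hr, circleAverage_def, smul_smul,
    mul_right_comm, mul_inv_cancel₀ two_pi_pos.ne', one_mul, ← intervalIntegral.integral_smul]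
  simp_rw [circleMap_sub_center, smul_inv_circleMap_smul hr]

theorem setIntegral_ball_inv_sub_smul_dbar (hF : ContDiff ℝ 1 F) (c : ℂ) {R : ℝ} (hR : 0 ≤ R) :
    ∫ z in ball c R, (z - c)⁻¹ • dbar F z = π • (circleAverage F c R - F c) := by
  have continuous_dbar : Continuous (dbar F) :=
    (contDiff_dbar hF (m := 0) (zero_add 1).le).continuous
  have integrable : IntegrableOn
      (fun p : ℝ × ℝ ↦ p.1 • (circleMap c p.1 p.2 - c)⁻¹ • dbar F (circleMap c p.1 p.2))
      (Ioo 0 R ×ˢ Ioo (-π) π) := by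
    refine IntegrableOn.congr_fun
      (f := fun p : ℝ × ℝ ↦ conj (circleMap 0 1 p.2) • dbar F (circleMap c p.1 p.2)) ?_
      (fun p hp ↦ ?_) (measurableSet_Ioo.prod measurableSet_Ioo)
    · exact (Continuous.continuousOn (by fun_prop)).integrableOn_compact
        (isCompact_Icc.prod isCompact_Icc) |>.mono_set
        (prod_mono Ioo_subset_Icc_self Ioo_subset_Icc_self)
    · simp only [circleMap_sub_center, smul_inv_circleMap_smul hp.1.1.ne']
  calc
    ∫ z in ball c R, (z - c)⁻¹ • dbar F z =
        ∫ r in 0..R, (2 * π * r) • circleAverage (fun z ↦ (z - c)⁻¹ • dbar F z) c r :=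
      setIntegral_ball_eq_integral_circleAverage hR integrable
    _ = ∫ r in 0..R, (1 / 2 : ℂ) •
          ∫ θ in 0..2 * π, fderiv ℝ F (circleMap c r θ) (circleMap 0 1 θ) :=
      intervalIntegral.integral_congr_Ioo_of_le hR fun r hr ↦
        smul_circleAverage_inv_sub_smul_dbar hF c hr.1.ne'
    _ = π • (circleAverage F c R - F c) := by
      rw [intervalIntegral.integral_smul, integral_integral_fderiv_circleMap_radial hF]
      module

theorem integral_inv_sub_smul_dbar (hF : ContDiff ℝ 1 F) (hF0 : Tendsto F (cobounded ℂ) (𝓝 0))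
    (hsupp : HasCompactSupport (dbar F)) (c : ℂ) :
    ∫ z, (z - c)⁻¹ • dbar F z = -(π • F c) := by
  have integral_eq_of_large : ∀ᶠ R in atTop,
      π • (circleAverage F c R - F c) = ∫ z, (z - c)⁻¹ • dbar F z := by
    obtain ⟨R₀, hR₀⟩ := hsupp.isCompact.isBounded.subset_ball c
    filter_upwards [eventually_ge_atTop R₀, eventually_ge_atTop 0] with R hR hR_nonneg
    rw [← setIntegral_ball_inv_sub_smul_dbar hF c hR_nonneg]
    refine setIntegral_eq_integral_of_forall_compl_eq_zero fun z hz ↦ ?_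
    rw [image_eq_zero_of_notMem_tsupport fun h ↦ hz (ball_subset_ball hR (hR₀ h)), smul_zero]
  have limit : Tendsto (fun R ↦ π • (circleAverage F c R - F c)) atTop (𝓝 (π • (0 - F c))) :=
    ((tendsto_circleAverage_atTop_zero hF0 c).sub_const (F c)).const_smul π
  rw [tendsto_nhds_unique (tendsto_const_nhds.congr' (integral_eq_of_large.mono fun _ h ↦ h.symm))
    limit, zero_sub, smul_neg]

end CauchyPompeiu

theorem cauchyT_dbar {F : ℂ → ℂ} (hF : ContDiff ℝ 1 F) (hF0 : Tendsto F (cobounded ℂ) (𝓝 0))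
    (hsupp : HasCompactSupport (dbar F)) : cauchyT (dbar F) = F := by
  ext z
  have kernel (μ : ℂ) : dbar F μ / (z - μ) = -((μ - z)⁻¹ • dbar F μ) := by
    rw [← neg_sub μ z, div_neg, div_eq_inv_mul, smul_eq_mul]
  simp_rw [cauchyT, kernel]
  rw [integral_neg, integral_inv_sub_smul_dbar hF hF0 hsupp, neg_neg, real_smul, ← mul_assoc,
    one_div_mul_cancel (ofReal_ne_zero.2 pi_ne_zero), one_mul]

theorem exists_contDiff_eqOn_of_contDiffOn_compl {V E : Type*} [NormedAddCommGroup V]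
    [NormedSpace ℝ V] [FiniteDimensional ℝ V] [NormedAddCommGroup E] [NormedSpace ℝ E] {n : ℕ∞}
    {f : V → E} {s t : Set V} (hs : IsClosed s) (ht : IsClosed t) (hst : Disjoint s t)
    (hf : ContDiffOn ℝ n f sᶜ) : ∃ F : V → E, ContDiff ℝ n F ∧ EqOn F f t := by
  obtain ⟨ρ, ρ_eq_zero, ρ_eq_one, -⟩ :=
    exists_contMDiffMap_zero_one_nhds_of_isClosed (n := n) (modelWithCornersSelf ℝ V) hs ht hst
  refine ⟨fun x ↦ ρ x • f x, contDiff_iff_contDiffAt.2 fun x ↦ ?_, fun x hx ↦ ?_⟩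
  · by_cases hx : x ∈ s
    · refine (contDiffAt_const (c := 0)).congr_of_eventuallyEq ?_
      filter_upwards [eventually_nhdsSet_iff_forall.1 ρ_eq_zero x hx] with y hy
      rw [hy, zero_smul]
    · exact ρ.contMDiff.contDiff.contDiffAt.smul (hf.contDiffAt (hs.isOpen_compl.mem_nhds hx))
  · simp only [ρ_eq_one.self_of_nhdsSet x hx, one_smul]

theorem cauchyT_surjective_onto_germs_general {W K : Set ℂ} (hW : IsOpen W) (hK : IsCompact K)
    (hKW : K ⊆ W) {f : ℂ → ℂ} (hf : DifferentiableOn ℂ f Kᶜ)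
    (hf0 : Tendsto f (cobounded ℂ) (𝓝 0)) :
    ∃ g : ℂ → ℂ, ContDiff ℝ (⊤ : ℕ∞) g ∧ IsCompact (tsupport g) ∧ tsupport g ⊆ W ∧
      ∃ K' : Set ℂ, IsCompact K' ∧ K' ⊆ W ∧ ∀ z ∉ K', cauchyT g z = f z := by
  obtain ⟨M, hM, hKM, hMW⟩ := exists_compact_between hK hW hKW
  have contDiffOn_f : ContDiffOn ℝ (⊤ : ℕ∞) f Kᶜ :=
    (hf.contDiffOn hK.isClosed.isOpen_compl).restrict_scalars ℝ
  obtain ⟨F, hF, hFf⟩ := exists_contDiff_eqOn_of_contDiffOn_compl hK.isClosed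
    isOpen_interior.isClosed_compl (disjoint_compl_right_iff_subset.2 hKM) contDiffOn_f
  replace hFf : EqOn F f Mᶜ := hFf.mono (compl_subset_compl.2 interior_subset)
  have hF0 : Tendsto F (cobounded ℂ) (𝓝 0) :=
    hf0.congr' (hFf.symm.eventuallyEq_of_mem hM.isBounded)
  have differentiableOn_F : DifferentiableOn ℂ F Mᶜ :=
    (hf.mono (compl_subset_compl.2 (hKM.trans interior_subset))).congr hFf
  have tsupport_subset : tsupport (dbar F) ⊆ M :=
    tsupport_dbar_subset hM.isClosed differentiableOn_F
  have compact_tsupport : IsCompact (tsupport (dbar F)) :=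
    hM.of_isClosed_subset (isClosed_tsupport _) tsupport_subset
  refine ⟨dbar F, contDiff_dbar hF le_rfl, compact_tsupport, tsupport_subset.trans hMW,
    M, hM, hMW, fun z hz ↦ ?_⟩
  rw [cauchyT_dbar (hF.of_le (mod_cast le_top)) hF0 compact_tsupport, hFf hz]

/-- Surjectivity onto germs vanishing at infinity (the `H¹`-surjectivity part of
Theorem 2.5 in concrete form): every function holomorphic off a compact `K ⊆ W` and
vanishing at infinity agrees, outside some compact subset of `W`, with the Cauchy
transform of a smooth function with compact support contained in `W`. -/
theorem cauchyT_surjective_onto_germs (W K : Set ℂ) (hW : IsOpen W)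
    (hWb : Bornology.IsBounded W) (hK : IsCompact K) (hKW : K ⊆ W)
    (f : ℂ → ℂ) (hf : DifferentiableOn ℂ f Kᶜ)
    (hf0 : Filter.Tendsto f (Bornology.cobounded ℂ) (nhds 0)) :
    ∃ g : ℂ → ℂ, ContDiff ℝ (⊤ : ℕ∞) g ∧ IsCompact (tsupport g) ∧ tsupport g ⊆ W ∧
      ∃ K' : Set ℂ, IsCompact K' ∧ K' ⊆ W ∧ ∀ z ∉ K', cauchyT g z = f z := by
  exact cauchyT_surjective_onto_germs_general hW hK hKW hf hf0
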